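/- If each gradient ∇f_ℓ is Lipschitz continuous on X, then the criticality measure ω is Lipschitz continuous (and hence uniformly continuous) on X. Quantitatively, if L is a Lipschitz constant of the Jacobian map x ↦ Df(x) on X (in the operator norm induced by the Euclidean norm) and D := max_{x∈X} ‖Df(x)‖ (same operator norm), then |ω(x) − ω(y)| ≤ √n·(L + 2D)·‖x − y‖₂ for all x, y ∈ X. (Theorem 2.3, proved in Appendix A.1.) -/

import Mathlib

noncomputable section

/-- The ℓ^∞ (maximum) norm on Euclidean space. -/
def supNorm {n : ℕ} (v : EuclideanSpace ℝ (Fin n)) : ℝ :=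
  ‖(WithLp.equiv 2 (Fin n → ℝ)) v‖

/-- The multiobjective criticality measure
`ω(x) = − inf { max_ℓ ⟨∇f_ℓ(x), d⟩ : x + d ∈ X, ‖d‖_∞ ≤ 1 }`. -/
def omega {n k : ℕ} (X : Set (EuclideanSpace ℝ (Fin n)))
    (f : Fin k → EuclideanSpace ℝ (Fin n) → ℝ) (x : EuclideanSpace ℝ (Fin n)) : ℝ :=
  - sInf ((fun d => ⨆ ℓ, fderiv ℝ (f ℓ) x d) ''
      {d : EuclideanSpace ℝ (Fin n) | x + d ∈ X ∧ supNorm d ≤ 1})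

/-!
The value `ω x` is minus the optimal value of the program of minimising `max_ℓ ⟨∇f_ℓ(x), d⟩` over
the feasible steps `d` at `x`, and such a value moves little when the linear forms and the feasible
set do. For the feasible set, let `d` be feasible at `x` and put `δ = ‖x - y‖_∞`. The segment from
`y ∈ X` to `x + d ∈ X` stays in `X` by convexity, and shrinking `x + d - y`, whose maximum norm is
at most `1 + δ`, by the factor `(1 + δ)⁻¹` gives a step feasible at `y` at maximum-norm distance at
most `2 δ` from `d`. Passing to the Euclidean norm costs the factor `√n`.
-/

section MinMax

variable {ι E : Type*} [SeminormedAddCommGroup E] [NormedSpace ℝ E]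

/-- The optimal value `inf_{d ∈ S} max_ℓ A_ℓ d` of the min-max program with linear objectives `A`
over the set `S`; it is meaningful for finite nonempty `ι` and bounded nonempty `S`, and takes the
conventional values of `sInf` and `⨆` otherwise. -/
def minMaxValue (A : ι → E →L[ℝ] ℝ) (S : Set E) : ℝ :=
  sInf ((fun d => ⨆ ℓ, A ℓ d) '' S)

variable [Finite ι] [Nonempty ι] {A B : ι → E →L[ℝ] ℝ} {S T : Set E}

theorem bddBelow_image_iSup_of_isBounded (A : ι → E →L[ℝ] ℝ) (hS : Bornology.IsBounded S) :
    BddBelow ((fun d => ⨆ ℓ, A ℓ d) '' S) := by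
  obtain ⟨ℓ⟩ := ‹Nonempty ι›
  obtain ⟨m, hm⟩ := ((A ℓ).lipschitz.isBounded_image hS).bddBelow
  refine ⟨m, Set.forall_mem_image.2 fun d hd => ?_⟩
  exact (hm (Set.mem_image_of_mem _ hd)).trans (Finite.le_ciSup (fun ℓ => A ℓ d) ℓ)

theorem minMaxValue_le_add_of_forall_exists_le (hS : S.Nonempty) (hT : Bornology.IsBounded T)
    {C : ℝ} (h : ∀ d ∈ S, ∃ e ∈ T, ∀ ℓ, B ℓ e ≤ A ℓ d + C) :
    minMaxValue B T ≤ minMaxValue A S + C := by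
  rw [← sub_le_iff_le_add]
  refine le_csInf (hS.image _) (Set.forall_mem_image.2 fun d hd => ?_)
  obtain ⟨e, he, hle⟩ := h d hd
  rw [sub_le_iff_le_add]
  calc minMaxValue B T ≤ ⨆ ℓ, B ℓ e :=
        csInf_le (bddBelow_image_iSup_of_isBounded B hT) (Set.mem_image_of_mem _ he)
    _ ≤ (⨆ ℓ, A ℓ d) + C := ciSup_le fun ℓ =>
        (hle ℓ).trans (add_le_add_left (Finite.le_ciSup (fun ℓ => A ℓ d) ℓ) C)

theorem minMaxValue_le_add_of_norm_sub_le (hS : S.Nonempty) (hT : Bornology.IsBounded T)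
    {a D R η : ℝ} (hAB : ∀ ℓ, ‖A ℓ - B ℓ‖ ≤ a) (hB : ∀ ℓ, ‖B ℓ‖ ≤ D) (hR : ∀ d ∈ S, ‖d‖ ≤ R)
    (h : ∀ d ∈ S, ∃ e ∈ T, ‖e - d‖ ≤ η) :
    minMaxValue B T ≤ minMaxValue A S + (D * η + a * R) := by
  refine minMaxValue_le_add_of_forall_exists_le hS hT fun d hd => ?_
  obtain ⟨e, he, hed⟩ := h d hd
  refine ⟨e, he, fun ℓ => ?_⟩
  have hstep : B ℓ (e - d) ≤ D * η :=
    (Real.le_norm_self _).trans ((B ℓ).le_of_opNorm_le_of_le (hB ℓ) hed)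
  have hform : -((A ℓ - B ℓ) d) ≤ a * R :=
    (neg_le_abs _).trans ((A ℓ - B ℓ).le_of_opNorm_le_of_le (hAB ℓ) (hR d hd))
  calc B ℓ e = A ℓ d + (B ℓ (e - d) + -((A ℓ - B ℓ) d)) := by
        rw [map_sub, sub_apply]
        ring
    _ ≤ A ℓ d + (D * η + a * R) := by gcongr

end MinMax

section FeasibleSteps

variable {E : Type*} [AddCommGroup E] [Module ℝ E]

/-- The steps of length at most `r`, measured by the seminorm `p`, that lead from `x` into `X`:
the feasible set of the program defining the criticality measure. -/
def feasibleSteps (p : Seminorm ℝ E) (r : ℝ) (X : Set E) (x : E) : Set E :=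
  {d | x + d ∈ X ∧ p d ≤ r}

variable (p : Seminorm ℝ E) {r : ℝ} {X : Set E} {x y d : E}

theorem zero_mem_feasibleSteps (hr : 0 ≤ r) (hx : x ∈ X) : 0 ∈ feasibleSteps p r X x :=
  ⟨by rwa [add_zero], by rwa [map_zero]⟩

theorem exists_mem_feasibleSteps_sub_le (hr : 0 < r) (hX : Convex ℝ X) (hy : y ∈ X)
    (hd : d ∈ feasibleSteps p r X x) :
    ∃ e ∈ feasibleSteps p r X y, p (e - d) ≤ 2 * p (x - y) := by
  obtain ⟨hdX, hdr⟩ := hd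
  set δ := p (x - y)
  have hδ : 0 ≤ δ := apply_nonneg p _
  set t : ℝ := r / (r + δ)
  have ht0 : 0 ≤ t := by positivity
  have ht1 : t ≤ 1 := div_le_one_of_le₀ (by linarith) (by positivity)
  have hsub : 0 ≤ 1 - t := sub_nonneg.2 ht1
  have ht : t * (r + δ) = r := div_mul_cancel₀ r (by positivity)
  refine ⟨t • (x + d - y), ⟨hX.add_smul_sub_mem hy hdX ⟨ht0, ht1⟩, ?_⟩, ?_⟩
  · calc p (t • (x + d - y)) = t * p (d + (x - y)) := by
          rw [map_smul_eq_mul, Real.norm_of_nonneg ht0, add_sub_right_comm, add_comm]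
      _ ≤ t * (r + δ) := by
          gcongr
          exact (map_add_le_add p _ _).trans (by gcongr)
      _ = r := ht
  · calc p (t • (x + d - y) - d) = p (t • (x - y) - (1 - t) • d) := by
          congr 1
          module
      _ ≤ p (t • (x - y)) + p ((1 - t) • d) := map_sub_le_add p _ _
      _ = t * δ + (1 - t) * p d := by
          rw [map_smul_eq_mul, map_smul_eq_mul, Real.norm_of_nonneg ht0,
            Real.norm_of_nonneg hsub]
      _ ≤ t * δ + (1 - t) * r := by gcongr
      _ = 2 * (t * δ) := by linear_combination -ht
      _ ≤ 2 * δ := by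
          gcongr
          exact mul_le_of_le_one_left hδ ht1

end FeasibleSteps

section NormedFeasibleSteps

variable {E : Type*} [SeminormedAddCommGroup E] [NormedSpace ℝ E] {p : Seminorm ℝ E} {c r : ℝ}
  {X : Set E} {x y : E}

theorem norm_le_of_mem_feasibleSteps (hc : 0 ≤ c) (hp : ∀ v, ‖v‖ ≤ c * p v) {d : E}
    (hd : d ∈ feasibleSteps p r X x) : ‖d‖ ≤ c * r :=
  (hp d).trans (mul_le_mul_of_nonneg_left hd.2 hc)

theorem minMaxValue_feasibleSteps_le_add {ι : Type*} [Finite ι] [Nonempty ι]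
    {A B : ι → E →L[ℝ] ℝ} {a D : ℝ} (hc : 0 ≤ c) (hp : ∀ v, ‖v‖ ≤ c * p v) (hr : 0 < r)
    (hX : Convex ℝ X) (hx : x ∈ X) (hy : y ∈ X)
    (hAB : ∀ ℓ, ‖A ℓ - B ℓ‖ ≤ a) (hB : ∀ ℓ, ‖B ℓ‖ ≤ D) :
    minMaxValue B (feasibleSteps p r X y) ≤
      minMaxValue A (feasibleSteps p r X x) + (D * (c * (2 * p (x - y))) + a * (c * r)) := by
  have hbdd : Bornology.IsBounded (feasibleSteps p r X y) :=
    isBounded_iff_forall_norm_le.2 ⟨c * r, fun _ => norm_le_of_mem_feasibleSteps hc hp⟩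
  refine minMaxValue_le_add_of_norm_sub_le ⟨0, zero_mem_feasibleSteps p hr.le hx⟩ hbdd hAB hB
    (fun _ => norm_le_of_mem_feasibleSteps hc hp) fun d hd => ?_
  obtain ⟨e, he, hed⟩ := exists_mem_feasibleSteps_sub_le p hr hX hy hd
  exact ⟨e, he, (hp _).trans (mul_le_mul_of_nonneg_left hed hc)⟩

end NormedFeasibleSteps

section SupNorm

variable {n : ℕ}

/-- The maximum norm `supNorm` on Euclidean space, bundled as a seminorm. -/
def supSeminorm (n : ℕ) : Seminorm ℝ (EuclideanSpace ℝ (Fin n)) :=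
  (normSeminorm ℝ (Fin n → ℝ)).comp (WithLp.linearEquiv 2 ℝ (Fin n → ℝ)).toLinearMap

theorem supSeminorm_apply (v : EuclideanSpace ℝ (Fin n)) : supSeminorm n v = ‖v.ofLp‖ :=
  rfl

theorem supSeminorm_le_norm (v : EuclideanSpace ℝ (Fin n)) : supSeminorm n v ≤ ‖v‖ :=
  (pi_norm_le_iff_of_nonneg (norm_nonneg v)).2 (PiLp.norm_apply_le v)

theorem norm_le_sqrt_mul_supSeminorm (v : EuclideanSpace ℝ (Fin n)) :
    ‖v‖ ≤ √n * supSeminorm n v := by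
  have h := (PiLp.antilipschitzWith_ofLp 2 fun _ : Fin n => ℝ).le_mul_dist v 0
  simpa [Real.sqrt_eq_rpow, supSeminorm_apply] using h

theorem omega_eq_neg_minMaxValue {k : ℕ} (X : Set (EuclideanSpace ℝ (Fin n)))
    (f : Fin k → EuclideanSpace ℝ (Fin n) → ℝ) (x : EuclideanSpace ℝ (Fin n)) :
    omega X f x =
      -minMaxValue (fun ℓ => fderiv ℝ (f ℓ) x) (feasibleSteps (supSeminorm n) 1 X x) :=
  rfl

end SupNorm

section Lipschitz

variable {n k : ℕ} {X : Set (EuclideanSpace ℝ (Fin n))}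
  {f : Fin k → EuclideanSpace ℝ (Fin n) → ℝ}
  {f' : Fin k → EuclideanSpace ℝ (Fin n) → EuclideanSpace ℝ (Fin n) →L[ℝ] ℝ} {L D : ℝ}
  {x y : EuclideanSpace ℝ (Fin n)}

theorem omega_sub_omega_le (hk : 1 ≤ k) (hX : Convex ℝ X)
    (hf : ∀ ℓ, ∀ z ∈ X, HasFDerivAt (f ℓ) (f' ℓ z) z)
    (hL : ∀ ℓ, ‖f' ℓ x - f' ℓ y‖ ≤ L * ‖x - y‖) (hD : ∀ ℓ, ‖f' ℓ y‖ ≤ D)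
    (hx : x ∈ X) (hy : y ∈ X) :
    omega X f x - omega X f y ≤ √n * (L + 2 * D) * ‖x - y‖ := by
  have : Nonempty (Fin k) := ⟨⟨0, hk⟩⟩
  have hD0 : 0 ≤ D := (norm_nonneg _).trans (hD ⟨0, hk⟩)
  rw [omega_eq_neg_minMaxValue, omega_eq_neg_minMaxValue, neg_sub_neg, sub_le_iff_le_add']
  simp only [(hf _ x hx).fderiv, (hf _ y hy).fderiv]
  refine (minMaxValue_feasibleSteps_le_add (Real.sqrt_nonneg _) norm_le_sqrt_mul_supSeminorm
    one_pos hX hx hy hL hD).trans (add_le_add_right ?_ _)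
  calc D * (√n * (2 * supSeminorm n (x - y))) + L * ‖x - y‖ * (√n * 1)
      ≤ D * (√n * (2 * ‖x - y‖)) + L * ‖x - y‖ * (√n * 1) := by
        gcongr
        exact supSeminorm_le_norm _
    _ = √n * (L + 2 * D) * ‖x - y‖ := by ring

theorem omega_lipschitz_general (hk : 1 ≤ k) (hX : Convex ℝ X)
    (hf : ∀ ℓ, ∀ z ∈ X, HasFDerivAt (f ℓ) (f' ℓ z) z)
    (hL : ∀ ℓ, ∀ x ∈ X, ∀ y ∈ X, ‖f' ℓ x - f' ℓ y‖ ≤ L * ‖x - y‖)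
    (hD : ∀ ℓ, ∀ z ∈ X, ‖f' ℓ z‖ ≤ D) (hx : x ∈ X) (hy : y ∈ X) :
    |omega X f x - omega X f y| ≤ √n * (L + 2 * D) * ‖x - y‖ := by
  refine abs_sub_le_iff.2 ⟨?_, norm_sub_rev x y ▸ ?_⟩
  · exact omega_sub_omega_le hk hX hf (hL · x hx y hy) (hD · y hy) hx hy
  · exact omega_sub_omega_le hk hX hf (hL · y hy x hx) (hD · x hx) hy hx

end Lipschitz

section Jacobian

theorem norm_proj_comp_le {𝕜 E ι : Type*} [RCLike 𝕜] [SeminormedAddCommGroup E] [NormedSpace 𝕜 E]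
    [Fintype ι] (ℓ : ι) (A : E →L[𝕜] EuclideanSpace 𝕜 ι) : ‖EuclideanSpace.proj ℓ ∘L A‖ ≤ ‖A‖ :=
  ContinuousLinearMap.opNorm_le_bound _ (norm_nonneg A) fun v =>
    (PiLp.norm_apply_le (A v) ℓ).trans (A.le_opNorm v)

theorem norm_fderiv_le_iSup_of_isCompact {𝕜 E G : Type*} [NontriviallyNormedField 𝕜]
    [NormedAddCommGroup E] [NormedSpace 𝕜 E] [NormedAddCommGroup G] [NormedSpace 𝕜 G]
    {F : E → G} {U X : Set E} (hF : ContDiffOn 𝕜 1 F U) (hU : IsOpen U) (hXU : X ⊆ U)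
    (hX : IsCompact X) {z : E} (hz : z ∈ X) : ‖fderiv 𝕜 F z‖ ≤ ⨆ x : X, ‖fderiv 𝕜 F x‖ := by
  have hcont : ContinuousOn (fun z => ‖fderiv 𝕜 F z‖) X :=
    ((hF.continuousOn_fderiv_of_isOpen hU le_rfl).mono hXU).norm
  have hbdd : BddAbove (Set.range fun x : X => ‖fderiv 𝕜 F x‖) := by
    simpa only [Set.image_eq_range] using hX.bddAbove_image hcont
  exact le_ciSup hbdd ⟨z, hz⟩

end Jacobian

/-- Theorem 2.3: if the Jacobian `Df` is Lipschitz on `X` (operator norm induced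
by the Euclidean norm) with constant `L`, and `D = max_{x∈X} ‖Df(x)‖`, then the
criticality measure `ω` is Lipschitz on `X` with constant `√n·(L + 2D)`
(w.r.t. the Euclidean norm), hence uniformly continuous. -/
theorem omega_lipschitz
    (n k : ℕ) (hk : 1 ≤ k)
    (X : Set (EuclideanSpace ℝ (Fin n)))
    (hXne : X.Nonempty) (hXconv : Convex ℝ X) (hXcomp : IsCompact X)
    (f : Fin k → EuclideanSpace ℝ (Fin n) → ℝ)
    (U : Set (EuclideanSpace ℝ (Fin n))) (hUopen : IsOpen U) (hXU : X ⊆ U)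
    (hf : ∀ ℓ, ContDiffOn ℝ 1 (f ℓ) U)
    -- the objective map `F = (f_1, …, f_k)` into Euclidean `ℝᵏ`
    (F : EuclideanSpace ℝ (Fin n) → EuclideanSpace ℝ (Fin k))
    (hF : ∀ x ℓ, F x ℓ = f ℓ x)
    -- `L` is a Lipschitz constant of the Jacobian map `x ↦ Df(x)` on `X`
    (L : ℝ) (hL : ∀ x ∈ X, ∀ y ∈ X, ‖fderiv ℝ F x - fderiv ℝ F y‖ ≤ L * ‖x - y‖)
    -- `D = max_{x∈X} ‖Df(x)‖`
    (D : ℝ) (hD : D = ⨆ x : X, ‖fderiv ℝ F (x : EuclideanSpace ℝ (Fin n))‖)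
    (x y : EuclideanSpace ℝ (Fin n)) (hx : x ∈ X) (hy : y ∈ X) :
    |omega X f x - omega X f y| ≤ Real.sqrt n * (L + 2 * D) * ‖x - y‖ := by
  obtain rfl : f = fun ℓ z => F z ℓ := funext₂ fun ℓ z => (hF z ℓ).symm
  have hFU : ContDiffOn ℝ 1 F U := contDiffOn_euclidean.2 hf
  have hdiff : ∀ z ∈ X, HasFDerivAt F (fderiv ℝ F z) z := fun z hz =>
    ((hFU.differentiableOn one_ne_zero).differentiableAt
      (hUopen.mem_nhds (hXU hz))).hasFDerivAt
  exact omega_lipschitz_general (f' := fun ℓ z => EuclideanSpace.proj ℓ ∘L fderiv ℝ F z) hk hXconv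
    (fun ℓ z hz => (EuclideanSpace.proj (𝕜 := ℝ) ℓ).hasFDerivAt.comp z (hdiff z hz))
    (fun ℓ x hx y hy => by
      simpa only [ContinuousLinearMap.comp_sub] using
        (norm_proj_comp_le ℓ (fderiv ℝ F x - fderiv ℝ F y)).trans (hL x hx y hy))
    (fun ℓ z hz => (norm_proj_comp_le ℓ _).trans
      (hD ▸ norm_fderiv_le_iSup_of_isCompact hFU hUopen hXU hXcomp hz))
    hx hy
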